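/- arXiv:1810.11749 — 4 statements merged into one kernel-verified Lean document; each statement's English description precedes it below -/
import Mathlib

section
/- Let X ∈ ℝ^{N₁×N₂}, let r, s be integers with 1 ≤ r ≤ s and s + r ≤ min{N₁, N₂}, and let e ∈ ℝ^m. Suppose rank(X) ≤ r and the linear map 𝓐 : ℝ^{N₁×N₂} → ℝ^m satisfies the modified rank-restricted isometry property of order s + r with constants 0 < α ≤ β; set γ := β/α. Let H be a best rank-s approximation of 𝓐*(sgn(𝓐(X) + e)). Suppose τ ≥ 1 and ν > 0 satisfy β²/τ ≤ ν ≤ β² and ν ≥ ‖H‖_F², and set μ := ‖𝓐(X) + e‖₁ / ν. Then ‖X − μ·H‖_F ≤ (1 − 1/(2γ²) + τ·√(r/(s+r)))·‖X‖_F + (6τ²/β)·‖e‖₁. -/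
noncomputable def frobNorm {N₁ N₂ : ℕ} (Z : Matrix (Fin N₁) (Fin N₂) ℝ) : ℝ :=
  Real.sqrt (∑ i, ∑ j, (Z i j) ^ 2)

def frobInner {N₁ N₂ : ℕ} (A B : Matrix (Fin N₁) (Fin N₂) ℝ) : ℝ :=
  ∑ i, ∑ j, A i j * B i j

def l1norm {m : ℕ} (v : Fin m → ℝ) : ℝ := ∑ i, |v i|

noncomputable def sgnVec {m : ℕ} (v : Fin m → ℝ) : Fin m → ℝ := fun i => Real.sign (v i)

def IsBestRankApprox {N₁ N₂ : ℕ} (k : ℕ) (Z H : Matrix (Fin N₁) (Fin N₂) ℝ) : Prop :=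
  H.rank ≤ k ∧
    ∀ W : Matrix (Fin N₁) (Fin N₂) ℝ, W.rank ≤ k → frobNorm (Z - H) ≤ frobNorm (Z - W)

/-!
The heart of the matter is the estimate `⟨X, M - H⟩ ≤ β √(r / (s + r)) ‖X‖` for the dual matrix
`M = 𝓐*(sgn (𝓐 X + e))`. Let the columns of `U` be an orthonormal basis of `range H + range X`;
there are at most `s + r` of them. The part of `M` orthogonal to this space contributes the same
error to every approximant with columns in it, so `UᵀH` is still a best rank-`s` approximation
of `UᵀM`. That matrix has at most `s + r` rows, and keeping only its `s` largest rows shows that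
the error `‖Uᵀ(M - H)‖²` is at most the fraction `r / (s + r)` of `‖UᵀM‖²`. Finally `‖UᵀM‖ ≤ β`,
because `⟨M, Z⟩ ≤ ‖𝓐 Z‖₁ ≤ β ‖Z‖` for every `Z` of rank at most `s + r`.

Since `⟨M, X⟩ ≥ ‖𝓐 X + e‖₁ - ‖e‖₁`, this bounds `⟨X, H⟩` from below, and expanding `‖X - μ H‖²`
leaves a quadratic inequality between real numbers.
-/

open Finset Matrix Module

section Frobenius

variable {N₁ N₂ n : ℕ}

lemma frobNorm_nonneg (Z : Matrix (Fin N₁) (Fin N₂) ℝ) : 0 ≤ frobNorm Z :=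
  Real.sqrt_nonneg _

lemma frobNorm_sq (Z : Matrix (Fin N₁) (Fin N₂) ℝ) : frobNorm Z ^ 2 = ∑ i, ∑ j, Z i j ^ 2 :=
  Real.sq_sqrt (by positivity)

lemma frobInner_self (Z : Matrix (Fin N₁) (Fin N₂) ℝ) : frobInner Z Z = frobNorm Z ^ 2 := by
  simp only [frobNorm_sq, frobInner, ← sq]

lemma frobInner_le_frobNorm_mul_frobNorm (Y Z : Matrix (Fin N₁) (Fin N₂) ℝ) :
    frobInner Y Z ≤ frobNorm Y * frobNorm Z := by
  simpa only [frobInner, frobNorm, Fintype.sum_prod_type] using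
    Real.sum_mul_le_sqrt_mul_sqrt (univ : Finset (Fin N₁ × Fin N₂))
      (fun p ↦ Y p.1 p.2) (fun p ↦ Z p.1 p.2)

lemma frobInner_eq_trace (Y Z : Matrix (Fin N₁) (Fin N₂) ℝ) : frobInner Y Z = (Yᵀ * Z).trace := by
  simp only [frobInner, trace, diag_apply, mul_apply, transpose_apply]
  exact sum_comm

lemma frobInner_comm (Y Z : Matrix (Fin N₁) (Fin N₂) ℝ) : frobInner Y Z = frobInner Z Y := by
  simp only [frobInner, mul_comm]

lemma frobInner_sub_right (X Y Z : Matrix (Fin N₁) (Fin N₂) ℝ) :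
    frobInner X (Y - Z) = frobInner X Y - frobInner X Z := by
  simp only [frobInner_eq_trace, Matrix.mul_sub, trace_sub]

lemma frobInner_mul_right (U : Matrix (Fin N₁) (Fin n) ℝ) (M : Matrix (Fin N₁) (Fin N₂) ℝ)
    (V : Matrix (Fin n) (Fin N₂) ℝ) : frobInner M (U * V) = frobInner (Uᵀ * M) V := by
  simp only [frobInner_eq_trace, transpose_mul, transpose_transpose, Matrix.mul_assoc]

lemma frobNorm_sub_smul_sq (X H : Matrix (Fin N₁) (Fin N₂) ℝ) (μ : ℝ) :
    frobNorm (X - μ • H) ^ 2 =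
      frobNorm X ^ 2 - 2 * μ * frobInner X H + μ ^ 2 * frobNorm H ^ 2 := by
  simp only [frobNorm_sq, frobInner, mul_sum, ← sum_add_distrib, ← sum_sub_distrib,
    Matrix.sub_apply, Matrix.smul_apply, smul_eq_mul]
  exact sum_congr rfl fun i _ ↦ sum_congr rfl fun j _ ↦ by ring

lemma frobNorm_sub_sq (Y Z : Matrix (Fin N₁) (Fin N₂) ℝ) :
    frobNorm (Y - Z) ^ 2 = frobNorm Y ^ 2 - 2 * frobInner Y Z + frobNorm Z ^ 2 := by
  simpa using frobNorm_sub_smul_sq Y Z 1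

end Frobenius

section OrthonormalColumns

variable {ι κ η : Type*} {N₁ N₂ n : ℕ} {U : Matrix (Fin N₁) (Fin n) ℝ}

lemma frobNorm_mul_of_transpose_mul_self (hU : Uᵀ * U = 1) (V : Matrix (Fin n) (Fin N₂) ℝ) :
    frobNorm (U * V) = frobNorm V := by
  have hsq : frobNorm (U * V) ^ 2 = frobNorm V ^ 2 := by
    rw [← frobInner_self, frobInner_mul_right, ← Matrix.mul_assoc, hU, Matrix.one_mul,
      frobInner_self]
  exact (pow_left_inj₀ (frobNorm_nonneg _) (frobNorm_nonneg _) two_ne_zero).1 hsq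

lemma frobNorm_sub_mul_sq (hU : Uᵀ * U = 1) (M : Matrix (Fin N₁) (Fin N₂) ℝ)
    (V : Matrix (Fin n) (Fin N₂) ℝ) :
    frobNorm (M - U * V) ^ 2 =
      frobNorm M ^ 2 - frobNorm (Uᵀ * M) ^ 2 + frobNorm (Uᵀ * M - V) ^ 2 := by
  rw [frobNorm_sub_sq, frobNorm_sub_sq, frobInner_mul_right, frobNorm_mul_of_transpose_mul_self hU]
  ring

lemma exists_matrix_orthonormal_columns [Fintype ι] (T : Submodule ℝ (EuclideanSpace ℝ ι)) :
    ∃ U : Matrix ι (Fin (finrank ℝ T)) ℝ, Uᵀ * U = 1 ∧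
      ∀ v, WithLp.toLp 2 v ∈ T → U *ᵥ (Uᵀ *ᵥ v) = v := by
  let b := stdOrthonormalBasis ℝ T
  refine ⟨of fun i k ↦ (b k : EuclideanSpace ℝ ι) i, ?_, fun v hv ↦ ?_⟩
  · ext k l
    have hkl := b.inner_eq_ite k l
    rw [Submodule.coe_inner, PiLp.inner_apply] at hkl
    simpa [mul_apply, one_apply, mul_comm] using hkl
  · have hexp := congrArg Subtype.val (b.sum_repr' ⟨WithLp.toLp 2 v, hv⟩)
    ext i
    have hi := congrArg (fun w : EuclideanSpace ℝ ι ↦ w i) hexp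
    simpa [mulVec, dotProduct, PiLp.inner_apply, mul_comm] using hi

lemma exists_orthonormal_columns_mul_transpose_mul_eq [Fintype ι] [Fintype κ] [Fintype η]
    (Y : Matrix ι κ ℝ) (Z : Matrix ι η ℝ) :
    ∃ n ≤ Y.rank + Z.rank, ∃ U : Matrix ι (Fin n) ℝ,
      Uᵀ * U = 1 ∧ U * (Uᵀ * Y) = Y ∧ U * (Uᵀ * Z) = Z := by
  let T := LinearMap.range Y.mulVecLin ⊔ LinearMap.range Z.mulVecLin
  let E := (WithLp.linearEquiv 2 ℝ (ι → ℝ)).symm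
  have hT : finrank ℝ (T.map E.toLinearMap) ≤ Y.rank + Z.rank :=
    (E.finrank_map_eq T).trans_le (Submodule.finrank_add_le_finrank_add_finrank _ _)
  obtain ⟨U, hU, hUT⟩ := exists_matrix_orthonormal_columns (T.map E.toLinearMap)
  refine ⟨_, hT, U, hU, ext_iff_mulVec.2 fun w ↦ ?_, ext_iff_mulVec.2 fun w ↦ ?_⟩
  · rw [← mulVec_mulVec, ← mulVec_mulVec]
    exact hUT _ ⟨_, Submodule.mem_sup_left ⟨w, rfl⟩, rfl⟩
  · rw [← mulVec_mulVec, ← mulVec_mulVec]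
    exact hUT _ ⟨_, Submodule.mem_sup_right ⟨w, rfl⟩, rfl⟩

end OrthonormalColumns

section LargestRows

variable {ι : Type*} {N₂ n : ℕ}

lemma exists_subset_card_eq_mul_sum_le (f : ι → ℝ) {s : ℕ} (T : Finset ι) (hs : s ≤ #T) :
    ∃ S ⊆ T, #S = s ∧ s * ∑ i ∈ T, f i ≤ #T * ∑ i ∈ S, f i := by
  classical
  induction hn : #T generalizing T with
  | zero => exact ⟨∅, by simp, by simp; omega, by simp_all⟩
  | succ n ih =>
    obtain rfl | hlt := (hn ▸ hs).eq_or_lt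
    · exact ⟨T, Subset.rfl, hn, le_rfl⟩
    -- Discarding a smallest term does not decrease the average.
    obtain ⟨i, hi, hmin⟩ := T.exists_min_image f (card_pos.1 (by omega))
    have hcard : #(T.erase i) = n := by rw [card_erase_of_mem hi, hn, Nat.add_sub_cancel]
    obtain ⟨S, hST, hS, hsum⟩ := ih (T.erase i) (by omega) hcard
    refine ⟨S, hST.trans (erase_subset i T), hS, ?_⟩
    have hi_le : s * f i ≤ ∑ k ∈ S, f k := by
      simpa [hS] using S.card_nsmul_le_sum f (f i) fun k hk ↦ hmin k (erase_subset i T (hST hk))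
    rw [← add_sum_erase T f hi]
    push_cast
    linarith

lemma exists_card_le_mul_sum_compl_le [Fintype ι] [DecidableEq ι] {f : ι → ℝ} (hf : ∀ i, 0 ≤ f i)
    {r s : ℕ} (hn : Fintype.card ι ≤ s + r) :
    ∃ S : Finset ι, #S ≤ s ∧ (s + r) * ∑ i ∈ Sᶜ, f i ≤ r * ∑ i, f i := by
  have hsum : 0 ≤ ∑ i, f i := sum_nonneg fun i _ ↦ hf i
  rcases le_total (Fintype.card ι) s with hle | hle
  · exact ⟨univ, hle, by simpa using mul_nonneg r.cast_nonneg hsum⟩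
  obtain ⟨S, -, hS, havg⟩ := exists_subset_card_eq_mul_sum_le f univ (hle.trans_eq card_univ.symm)
  refine ⟨S, hS.le, ?_⟩
  have hcard : (#(univ : Finset ι) : ℝ) ≤ s + r := by exact_mod_cast hn
  have hS_nonneg : 0 ≤ ∑ i ∈ S, f i := sum_nonneg fun i _ ↦ hf i
  have hkeep : s * ∑ i, f i ≤ (s + r) * ∑ i ∈ S, f i :=
    havg.trans (mul_le_mul_of_nonneg_right hcard hS_nonneg)
  have hsplit := sum_add_sum_compl S f
  calc (s + r) * ∑ i ∈ Sᶜ, f i = (s + r) * ∑ i, f i - (s + r) * ∑ i ∈ S, f i := by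
        rw [← hsplit]; ring
    _ ≤ r * ∑ i, f i := by linarith

lemma exists_rank_le_mul_frobNorm_sub_sq_le (B : Matrix (Fin n) (Fin N₂) ℝ) {r s : ℕ}
    (hn : n ≤ s + r) :
    ∃ V : Matrix (Fin n) (Fin N₂) ℝ, V.rank ≤ s ∧
      (s + r) * frobNorm (B - V) ^ 2 ≤ r * frobNorm B ^ 2 := by
  obtain ⟨S, hS, hsum⟩ := exists_card_le_mul_sum_compl_le (f := fun i ↦ ∑ j, B i j ^ 2)
    (fun i ↦ by positivity) ((Fintype.card_fin n).trans_le hn)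
  refine ⟨diagonal (fun i ↦ if i ∈ S then (1 : ℝ) else 0) * B, ?_, ?_⟩
  · refine (rank_mul_le_left _ _).trans ?_
    simpa [rank_diagonal] using hS
  · have hrest : frobNorm (B - diagonal (fun i ↦ if i ∈ S then (1 : ℝ) else 0) * B) ^ 2 =
        ∑ i ∈ Sᶜ, ∑ j, B i j ^ 2 := by
      rw [frobNorm_sq, ← sum_add_sum_compl S, sum_eq_zero fun i hi ↦ ?_, zero_add]
      · exact sum_congr rfl fun i hi ↦ by simp [mem_compl.1 hi]
      · simp [hi]
    rwa [hrest, frobNorm_sq]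

end LargestRows

namespace IsBestRankApprox

variable {N₁ N₂ n r s : ℕ}

lemma frobNorm_sub_le {B G : Matrix (Fin n) (Fin N₂) ℝ} (hG : IsBestRankApprox s B G)
    (hn : n ≤ s + r) :
    frobNorm (B - G) ≤ √((r : ℝ) / (s + r)) * frobNorm B := by
  rcases (s + r).eq_zero_or_pos with hzero | hpos
  · obtain rfl : n = 0 := by omega
    simp [frobNorm]
  obtain ⟨V, hV, hBV⟩ := exists_rank_le_mul_frobNorm_sub_sq_le B hn
  have hsr : (0 : ℝ) < s + r := by exact_mod_cast hpos
  refine le_of_sq_le_sq ?_ (mul_nonneg (Real.sqrt_nonneg _) (frobNorm_nonneg B))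
  calc frobNorm (B - G) ^ 2 ≤ frobNorm (B - V) ^ 2 :=
        pow_le_pow_left₀ (frobNorm_nonneg _) (hG.2 V hV) 2
    _ ≤ r / (s + r) * frobNorm B ^ 2 := by
        rw [div_mul_eq_mul_div, le_div_iff₀' hsr]
        exact hBV
    _ = (√((r : ℝ) / (s + r)) * frobNorm B) ^ 2 := by
        rw [mul_pow, Real.sq_sqrt (by positivity)]

lemma transpose_mul {U : Matrix (Fin N₁) (Fin n) ℝ} {M H : Matrix (Fin N₁) (Fin N₂) ℝ}
    (hH : IsBestRankApprox s M H) (hU : Uᵀ * U = 1) (hUH : U * (Uᵀ * H) = H) :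
    IsBestRankApprox s (Uᵀ * M) (Uᵀ * H) := by
  refine ⟨(rank_mul_le_right _ _).trans hH.1, fun V hV ↦ ?_⟩
  have hle := pow_le_pow_left₀ (frobNorm_nonneg _)
    (hH.2 (U * V) ((rank_mul_le_right _ _).trans hV)) 2
  rw [← hUH, frobNorm_sub_mul_sq hU, frobNorm_sub_mul_sq hU] at hle
  exact le_of_sq_le_sq (by linarith) (frobNorm_nonneg _)

end IsBestRankApprox

section DualBound

variable {N₁ N₂ n r s k : ℕ} {M H X : Matrix (Fin N₁) (Fin N₂) ℝ} {β : ℝ}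

lemma frobNorm_transpose_mul_le {U : Matrix (Fin N₁) (Fin n) ℝ} (hU : Uᵀ * U = 1) (hn : n ≤ k)
    (hβ : 0 ≤ β) (hM : ∀ Z : Matrix (Fin N₁) (Fin N₂) ℝ, Z.rank ≤ k →
      frobInner M Z ≤ β * frobNorm Z) :
    frobNorm (Uᵀ * M) ≤ β := by
  have hrank : (U * (Uᵀ * M)).rank ≤ k :=
    (rank_mul_le_left _ _).trans ((rank_le_width U).trans hn)
  have hsq := hM _ hrank
  rw [frobInner_mul_right, frobInner_self, frobNorm_mul_of_transpose_mul_self hU, sq] at hsq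
  rcases (frobNorm_nonneg (Uᵀ * M)).eq_or_lt with hzero | hpos
  · rwa [← hzero]
  · exact le_of_mul_le_mul_right hsq hpos

lemma IsBestRankApprox.frobInner_sub_le (hH : IsBestRankApprox s M H) (hX : X.rank ≤ r)
    (hβ : 0 ≤ β) (hM : ∀ Z : Matrix (Fin N₁) (Fin N₂) ℝ, Z.rank ≤ s + r →
      frobInner M Z ≤ β * frobNorm Z) :
    frobInner X (M - H) ≤ β * √((r : ℝ) / (s + r)) * frobNorm X := by
  obtain ⟨n, hn, U, hU, hUH, hUX⟩ := exists_orthonormal_columns_mul_transpose_mul_eq H X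
  have hnsr : n ≤ s + r := hn.trans (add_le_add hH.1 hX)
  have hUX_norm : frobNorm (Uᵀ * X) = frobNorm X := by
    rw [← frobNorm_mul_of_transpose_mul_self hU, hUX]
  have herror : frobNorm (Uᵀ * M - Uᵀ * H) ≤ √((r : ℝ) / (s + r)) * frobNorm (Uᵀ * M) :=
    (hH.transpose_mul hU hUH).frobNorm_sub_le hnsr
  calc frobInner X (M - H) = frobInner (Uᵀ * M - Uᵀ * H) (Uᵀ * X) := by
        rw [← Matrix.mul_sub, ← frobInner_mul_right, hUX, frobInner_comm]
    _ ≤ frobNorm (Uᵀ * M - Uᵀ * H) * frobNorm X :=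
        hUX_norm ▸ frobInner_le_frobNorm_mul_frobNorm _ _
    _ ≤ β * √((r : ℝ) / (s + r)) * frobNorm X := by
        refine mul_le_mul_of_nonneg_right ?_ (frobNorm_nonneg X)
        rw [mul_comm β]
        exact herror.trans (mul_le_mul_of_nonneg_left (frobNorm_transpose_mul_le hU hnsr hβ hM)
          (Real.sqrt_nonneg _))

end DualBound

section Sign

variable {m : ℕ}

lemma l1norm_nonneg (v : Fin m → ℝ) : 0 ≤ l1norm v :=
  sum_nonneg fun _ _ ↦ abs_nonneg _

lemma l1norm_neg (v : Fin m → ℝ) : l1norm (-v) = l1norm v := by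
  simp only [l1norm, Pi.neg_apply, abs_neg]

lemma l1norm_add_le (v w : Fin m → ℝ) : l1norm (v + w) ≤ l1norm v + l1norm w := by
  simp only [l1norm, ← sum_add_distrib]
  exact sum_le_sum fun i _ ↦ abs_add_le _ _

lemma l1norm_sub_le_l1norm_add (v w : Fin m → ℝ) : l1norm v - l1norm w ≤ l1norm (v + w) := by
  have h := l1norm_add_le (v + w) (-w)
  rw [add_neg_cancel_right, l1norm_neg] at h
  linarith

lemma sgnVec_dotProduct_le (v w : Fin m → ℝ) : sgnVec v ⬝ᵥ w ≤ l1norm w := by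
  refine sum_le_sum fun i _ ↦ ?_
  rcases Real.sign_apply_eq (v i) with h | h | h <;> rw [sgnVec, h]
  · simpa only [neg_one_mul] using neg_le_abs (w i)
  · simp
  · simpa only [one_mul] using le_abs_self (w i)

lemma sgnVec_dotProduct_self (v : Fin m → ℝ) : sgnVec v ⬝ᵥ v = l1norm v := by
  refine sum_congr rfl fun i _ ↦ ?_
  rcases lt_trichotomy (v i) 0 with h | h | h
  · rw [sgnVec, Real.sign_of_neg h, abs_of_neg h, neg_one_mul]
  · rw [h, mul_zero, abs_zero]
  · rw [sgnVec, Real.sign_of_pos h, abs_of_pos h, one_mul]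

lemma l1norm_add_sub_le_sgnVec_dotProduct (v w : Fin m → ℝ) :
    l1norm (v + w) - l1norm w ≤ sgnVec (v + w) ⬝ᵥ v := by
  have hself := sgnVec_dotProduct_self (v + w)
  rw [dotProduct_add] at hself
  linarith [sgnVec_dotProduct_le (v + w) w]

end Sign

lemma sq_mul_sq_sub_le_sq {x δ κ d : ℝ} (hx : 0 ≤ x) (hδ : 0 ≤ δ) (hκ : 0 ≤ κ) (hκ1 : κ ≤ 1)
    (h : κ * x - δ ≤ d) : κ ^ 2 * x ^ 2 - 2 * (x * δ) ≤ d ^ 2 := by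
  have hκx : 0 ≤ κ * x := mul_nonneg hκ hx
  have hκxδ : κ * x * δ ≤ x * δ :=
    mul_le_mul_of_nonneg_right (mul_le_of_le_one_left hx hκ1) hδ
  rcases le_total (κ * x) δ with hle | hle
  · nlinarith [mul_le_mul_of_nonneg_left hle hκx, mul_nonneg hκx hδ]
  · nlinarith [pow_le_pow_left₀ (sub_nonneg.2 hle) h 2]

lemma le_of_sq_le_quadratic {F x δ κ τ σ : ℝ} (hx : 0 ≤ x) (hδ : 0 ≤ δ) (hκ : 0 ≤ κ) (hκ1 : κ ≤ 1)
    (hτ : 1 ≤ τ) (hσ : 0 ≤ σ) (hστ : σ ≤ τ)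
    (hF : F ^ 2 ≤
      (1 - κ ^ 2 + 2 * σ) * x ^ 2 + (2 + 2 * τ + 2 * σ) * (x * δ) + 2 * τ * δ ^ 2) :
    F ≤ (1 - κ ^ 2 / 2 + σ) * x + 6 * τ ^ 2 * δ := by
  have hττ : τ ≤ τ ^ 2 := le_self_pow₀ hτ two_ne_zero
  have hK : 1 / 2 + σ ≤ 1 - κ ^ 2 / 2 + σ := by linarith [pow_le_one₀ (n := 2) hκ hκ1]
  have hxx : 1 - κ ^ 2 + 2 * σ ≤ (1 - κ ^ 2 / 2 + σ) ^ 2 := by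
    linarith [sq_nonneg (σ - κ ^ 2 / 2)]
  have hxδ : 2 + 2 * τ + 2 * σ ≤ 12 * τ ^ 2 * (1 - κ ^ 2 / 2 + σ) := by
    calc 2 + 2 * τ + 2 * σ ≤ 12 * τ ^ 2 * (1 / 2) := by linarith
      _ ≤ 12 * τ ^ 2 * (1 - κ ^ 2 / 2 + σ) :=
          mul_le_mul_of_nonneg_left (by linarith) (by positivity)
  have hδδ : 2 * τ ≤ 36 * τ ^ 4 := by linarith [le_self_pow₀ hτ four_ne_zero]
  refine le_of_sq_le_sq (hF.trans ?_)
    (add_nonneg (mul_nonneg (by linarith) hx) (by positivity))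
  calc _ ≤ (1 - κ ^ 2 / 2 + σ) ^ 2 * x ^ 2 + 12 * τ ^ 2 * (1 - κ ^ 2 / 2 + σ) * (x * δ)
        + 36 * τ ^ 4 * δ ^ 2 := by gcongr
    _ = ((1 - κ ^ 2 / 2 + σ) * x + 6 * τ ^ 2 * δ) ^ 2 := by ring

-- Here `F = ‖X - μ H‖`, `x = ‖X‖`, `ε = ‖e‖₁`, `b = ‖𝓐 X + e‖₁` and `ρ = √(r / (s + r))`.
lemma le_of_sq_le_sub_stepsize_mul {F x ε b α β τ ν ρ : ℝ} (hx : 0 ≤ x) (hε : 0 ≤ ε) (hα : 0 < α)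
    (hαβ : α ≤ β) (hτ : 1 ≤ τ) (hτν : β ^ 2 / τ ≤ ν) (hνβ : ν ≤ β ^ 2) (hρ : 0 ≤ ρ) (hρ1 : ρ ≤ 1)
    (hb : 0 ≤ b) (hαb : α * x - ε ≤ b) (hbβ : b ≤ β * x + ε)
    (hF : F ^ 2 ≤ x ^ 2 - b / ν * b + 2 * (b / ν) * (ε + β * ρ * x)) :
    F ≤ (1 - 1 / (2 * (β / α) ^ 2) + τ * ρ) * x + 6 * τ ^ 2 / β * ε := by
  have hβ : 0 < β := hα.trans_le hαβ
  have hν : 0 < ν := lt_of_lt_of_le (by positivity) hτν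
  have hlower : (α / β) ^ 2 * x ^ 2 - 2 * (x * (ε / β)) ≤ (b / β) ^ 2 :=
    sq_mul_sq_sub_le_sq hx (by positivity) (by positivity) (div_le_one_of_le₀ hαβ hβ.le)
      (by rw [div_mul_eq_mul_div, ← sub_div]; gcongr)
  have hgain : (b / β) ^ 2 ≤ b / ν * b := by
    rw [div_pow, div_mul_eq_mul_div, ← sq]
    gcongr
  have hstep : b / ν * β ≤ τ * (x + ε / β) := by
    have hβν : β ^ 2 / ν ≤ τ := div_le_of_le_mul₀ hν.le (by linarith) <|
      mul_comm ν τ ▸ (div_le_iff₀ (by linarith)).1 hτν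
    calc b / ν * β = β ^ 2 / ν * (b / β) := by field_simp
      _ ≤ τ * ((β * x + ε) / β) := by gcongr
      _ = τ * (x + ε / β) := by field_simp
  have hquad : F ^ 2 ≤ (1 - (α / β) ^ 2 + 2 * (τ * ρ)) * x ^ 2
      + (2 + 2 * τ + 2 * (τ * ρ)) * (x * (ε / β)) + 2 * τ * (ε / β) ^ 2 := by
    calc F ^ 2 ≤ x ^ 2 - b / ν * b + 2 * (b / ν * β) * (ε / β + ρ * x) := by
          convert hF using 2
          field_simp
      _ ≤ x ^ 2 - ((α / β) ^ 2 * x ^ 2 - 2 * (x * (ε / β)))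
          + 2 * (τ * (x + ε / β)) * (ε / β + ρ * x) := by
          gcongr
          exact hlower.trans hgain
      _ = _ := by ring
  convert le_of_sq_le_quadratic hx (by positivity) (by positivity)
    (div_le_one_of_le₀ hαβ hβ.le) hτ (by positivity) (mul_le_of_le_one_right (by linarith) hρ1)
    hquad using 2
  · field_simp
  · field_simp

lemma frobNorm_sub_smul_sq_le {N₁ N₂ : ℕ} {X H : Matrix (Fin N₁) (Fin N₂) ℝ} {b c ν : ℝ}
    (hb : 0 ≤ b) (hν : 0 < ν) (hHν : frobNorm H ^ 2 ≤ ν) (hinner : b - c ≤ frobInner X H) :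
    frobNorm (X - (b / ν) • H) ^ 2 ≤ frobNorm X ^ 2 - b / ν * b + 2 * (b / ν) * c := by
  calc frobNorm (X - (b / ν) • H) ^ 2
      = frobNorm X ^ 2 - 2 * (b / ν) * frobInner X H + (b / ν) ^ 2 * frobNorm H ^ 2 :=
        frobNorm_sub_smul_sq X H _
    _ ≤ frobNorm X ^ 2 - 2 * (b / ν) * (b - c) + (b / ν) ^ 2 * ν := by gcongr
    _ = frobNorm X ^ 2 - b / ν * b + 2 * (b / ν) * c := by field_simp; ring

theorem stmt4_general {N₁ N₂ m : ℕ} (r s : ℕ)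
    (A : Matrix (Fin N₁) (Fin N₂) ℝ →ₗ[ℝ] (Fin m → ℝ))
    (Astar : (Fin m → ℝ) →ₗ[ℝ] Matrix (Fin N₁) (Fin N₂) ℝ)
    (hadj : ∀ (u : Fin m → ℝ) (Z : Matrix (Fin N₁) (Fin N₂) ℝ),
      frobInner (Astar u) Z = ∑ i, u i * A Z i)
    (α β : ℝ) (hα : 0 < α) (hαβ : α ≤ β)
    (hRIP : ∀ Z : Matrix (Fin N₁) (Fin N₂) ℝ, Z.rank ≤ s + r →
      α * frobNorm Z ≤ l1norm (A Z) ∧ l1norm (A Z) ≤ β * frobNorm Z)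
    (X : Matrix (Fin N₁) (Fin N₂) ℝ) (hX : X.rank ≤ r) (e : Fin m → ℝ)
    (H : Matrix (Fin N₁) (Fin N₂) ℝ)
    (hH : IsBestRankApprox s (Astar (sgnVec (A X + e))) H)
    (τ ν : ℝ) (hτ : 1 ≤ τ) (hν1 : β ^ 2 / τ ≤ ν) (hν2 : ν ≤ β ^ 2)
    (hν3 : frobNorm H ^ 2 ≤ ν)
    (μ : ℝ) (hμ : μ = l1norm (A X + e) / ν) :
    frobNorm (X - μ • H) ≤
      (1 - 1 / (2 * (β / α) ^ 2) + τ * Real.sqrt ((r : ℝ) / ((s : ℝ) + (r : ℝ)))) * frobNorm X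
        + (6 * τ ^ 2 / β) * l1norm e := by
  subst hμ
  have hβ : 0 < β := hα.trans_le hαβ
  have hν : 0 < ν := lt_of_lt_of_le (by positivity) hν1
  have hdual : ∀ Z : Matrix (Fin N₁) (Fin N₂) ℝ, Z.rank ≤ s + r →
      frobInner (Astar (sgnVec (A X + e))) Z ≤ β * frobNorm Z := fun Z hZ ↦
    (hadj _ Z).trans_le ((sgnVec_dotProduct_le _ _).trans (hRIP Z hZ).2)
  have htail := hH.frobInner_sub_le hX hβ.le hdual
  have hcorr : l1norm (A X + e) - l1norm e ≤ frobInner (Astar (sgnVec (A X + e))) X :=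
    (l1norm_add_sub_le_sgnVec_dotProduct _ _).trans_eq (hadj _ X).symm
  rw [frobInner_sub_right, frobInner_comm X (Astar _)] at htail
  have hρ : √((r : ℝ) / (s + r)) ≤ 1 :=
    Real.sqrt_le_one.2 (div_le_one_of_le₀ (by linarith [s.cast_nonneg (α := ℝ)]) (by positivity))
  obtain ⟨hlower, hupper⟩ := hRIP X (hX.trans (Nat.le_add_left _ _))
  refine le_of_sq_le_sub_stepsize_mul (frobNorm_nonneg X) (l1norm_nonneg e) hα hαβ hτ hν1 hν2
    (Real.sqrt_nonneg _) hρ (l1norm_nonneg (A X + e)) ?_ ?_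
    (frobNorm_sub_smul_sq_le (l1norm_nonneg _) hν hν3 (by linarith))
  · linarith [l1norm_sub_le_l1norm_add (A X) e]
  · linarith [l1norm_add_le (A X) e]

/-- Proposition 2: under the modified rank-restricted isometry property of order s + r,
with H a best rank-s approximation of 𝓐*(sgn(𝓐(X) + e)) and a suitable stepsize μ,
‖X − μH‖_F ≤ (1 − 1/(2γ²) + τ√(r/(s+r)))·‖X‖_F + (6τ²/β)·‖e‖₁, where γ := β/α. -/
theorem stmt4 {N₁ N₂ m : ℕ} (r s : ℕ) (hr : 1 ≤ r) (hrs : r ≤ s)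
    (hdim : s + r ≤ min N₁ N₂)
    (A : Matrix (Fin N₁) (Fin N₂) ℝ →ₗ[ℝ] (Fin m → ℝ))
    (Astar : (Fin m → ℝ) →ₗ[ℝ] Matrix (Fin N₁) (Fin N₂) ℝ)
    (hadj : ∀ (u : Fin m → ℝ) (Z : Matrix (Fin N₁) (Fin N₂) ℝ),
      frobInner (Astar u) Z = ∑ i, u i * A Z i)
    (α β : ℝ) (hα : 0 < α) (hαβ : α ≤ β)
    (hRIP : ∀ Z : Matrix (Fin N₁) (Fin N₂) ℝ, Z.rank ≤ s + r →
      α * frobNorm Z ≤ l1norm (A Z) ∧ l1norm (A Z) ≤ β * frobNorm Z)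
    (X : Matrix (Fin N₁) (Fin N₂) ℝ) (hX : X.rank ≤ r) (e : Fin m → ℝ)
    (H : Matrix (Fin N₁) (Fin N₂) ℝ)
    (hH : IsBestRankApprox s (Astar (sgnVec (A X + e))) H)
    (τ ν : ℝ) (hτ : 1 ≤ τ) (hν1 : β ^ 2 / τ ≤ ν) (hν2 : ν ≤ β ^ 2)
    (hν3 : frobNorm H ^ 2 ≤ ν)
    (μ : ℝ) (hμ : μ = l1norm (A X + e) / ν) :
    frobNorm (X - μ • H) ≤
      (1 - 1 / (2 * (β / α) ^ 2) + τ * Real.sqrt ((r : ℝ) / ((s : ℝ) + (r : ℝ)))) * frobNorm X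
        + (6 * τ ^ 2 / β) * l1norm e :=
  stmt4_general r s A Astar hadj α β hα hαβ hRIP X hX e H hH τ ν hτ hν1 hν2 hν3 μ hμ
end

section
/- Let 𝓐 : ℝ^{N₁×N₂} → ℝ^m be a linear map and let k be a positive integer with k ≤ min{N₁, N₂}. Suppose β > 0 satisfies ‖𝓐(Z)‖₁ ≤ β·‖Z‖_F for all Z ∈ ℝ^{N₁×N₂} with rank(Z) ≤ k. Let w ∈ ℝ^m with |wᵢ| ≤ 1 for all i = 1, …, m, and let H be a best rank-k approximation of 𝓐*(w). Then ‖H‖_F ≤ β. -/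
/-! For fixed `h`, the function `t ↦ ‖z - t • h‖` is minimal at `t = 1` when `h` is a best
approximation of `z` in a cone, so `z - h` is orthogonal to `h`, that is `⟪z, h⟫ = ‖h‖ ^ 2`. The
matrices of rank at most `k` form such a cone, and for `z = 𝓐* w` the left-hand side is
`⟨w, 𝓐 h⟩ ≤ ‖𝓐 h‖₁ ≤ β * ‖h‖`. -/

open scoped RealInnerProductSpace Matrix.Norms.Frobenius

theorem sum_mul_le_sum_abs {ι R : Type*} [Ring R] [LinearOrder R] [IsOrderedRing R]
    (s : Finset ι) {w v : ι → R} (hw : ∀ i ∈ s, |w i| ≤ 1) :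
    ∑ i ∈ s, w i * v i ≤ ∑ i ∈ s, |v i| :=
  Finset.sum_le_sum fun i hi ↦ calc
    w i * v i ≤ |w i| * |v i| := (le_abs_self _).trans_eq (abs_mul _ _)
    _ ≤ |v i| := mul_le_of_le_one_left (abs_nonneg _) (hw i hi)

section InnerProductSpace

variable {E : Type*} [NormedAddCommGroup E] [InnerProductSpace ℝ E]

theorem inner_sub_self_eq_zero_of_isLocalMin {z h : E}
    (hmin : IsLocalMin (fun t : ℝ ↦ ‖z - t • h‖) 1) : ⟪z - h, h⟫ = 0 := by
  have hmin_sq : IsLocalMin (fun t : ℝ ↦ ‖z - t • h‖ ^ 2) 1 :=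
    hmin.mono fun _ ht ↦ pow_le_pow_left₀ (norm_nonneg _) ht 2
  have hderiv : HasDerivAt (fun t : ℝ ↦ ‖z - t • h‖ ^ 2) (-2 * ⟪z - h, h⟫) 1 := by
    simpa using (((hasDerivAt_id (1 : ℝ)).smul_const h).const_sub z).norm_sq
  simpa using hmin_sq.hasDerivAt_eq_zero hderiv

theorem inner_eq_norm_sq_of_isMinOn_cone {C : Set E} (hC : ∀ t : ℝ, 0 < t → ∀ x ∈ C, t • x ∈ C)
    {z h : E} (hh : h ∈ C) (hmin : IsMinOn (fun x ↦ ‖z - x‖) C h) : ⟪z, h⟫ = ‖h‖ ^ 2 := by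
  have hlocal : IsLocalMin (fun t : ℝ ↦ ‖z - t • h‖) 1 := by
    filter_upwards [lt_mem_nhds one_pos] with t ht
    simpa only [one_smul] using isMinOn_iff.1 hmin _ (hC t ht h hh)
  have horth := inner_sub_self_eq_zero_of_isLocalMin hlocal
  rwa [inner_sub_left, real_inner_self_eq_norm_sq, sub_eq_zero] at horth

theorem stmt8_general {ι : Type*} [Fintype ι] {C : Set E}
    (hC : ∀ t : ℝ, 0 < t → ∀ x ∈ C, t • x ∈ C)
    (A : E →ₗ[ℝ] (ι → ℝ)) (Astar : (ι → ℝ) →ₗ[ℝ] E)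
    (hadj : ∀ u x, ⟪Astar u, x⟫ = ∑ i, u i * A x i) {β : ℝ} (hβ : 0 ≤ β)
    (hup : ∀ x ∈ C, ∑ i, |A x i| ≤ β * ‖x‖) {w : ι → ℝ} (hw : ∀ i, |w i| ≤ 1)
    {h : E} (hh : h ∈ C) (hmin : IsMinOn (fun x ↦ ‖Astar w - x‖) C h) : ‖h‖ ≤ β := by
  have hmul : ‖h‖ * ‖h‖ ≤ β * ‖h‖ := calc
    ‖h‖ * ‖h‖ = ⟪Astar w, h⟫ := by rw [inner_eq_norm_sq_of_isMinOn_cone hC hh hmin, sq]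
    _ = ∑ i, w i * A h i := hadj w h
    _ ≤ ∑ i, |A h i| := sum_mul_le_sum_abs _ fun i _ ↦ hw i
    _ ≤ β * ‖h‖ := hup h hh
  rcases (norm_nonneg h).eq_or_lt with hzero | hpos
  · exact hzero ▸ hβ
  · exact le_of_mul_le_mul_right hmul hpos

end InnerProductSpace

theorem frobenius_norm_eq_sqrt {m n : Type*} [Fintype m] [Fintype n] (Z : Matrix m n ℝ) :
    ‖Z‖ = √(∑ i, ∑ j, Z i j ^ 2) := by
  simp only [Matrix.frobenius_norm_def, Real.sqrt_eq_rpow, Real.rpow_two, Real.norm_eq_abs, sq_abs]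

/-- The Frobenius inner product on real matrices. It extends Mathlib's Frobenius norm, which is
scoped, and therefore is itself activated only as a local instance. -/
@[reducible] noncomputable def frobeniusInnerProductSpace {m n : Type*} [Fintype m] [Fintype n] :
    InnerProductSpace ℝ (Matrix m n ℝ) where
  inner A B := ∑ i, ∑ j, A i j * B i j
  norm_sq_eq_re_inner A := by
    rw [frobenius_norm_eq_sqrt, Real.sq_sqrt (by positivity)]
    simp only [RCLike.re_to_real, sq]
  conj_inner_symm A B := by simp only [conj_trivial, mul_comm]
  add_left A B D := by simp only [Matrix.add_apply, add_mul, Finset.sum_add_distrib]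
  smul_left A B t := by
    simp only [Matrix.smul_apply, smul_eq_mul, conj_trivial, mul_assoc, Finset.mul_sum]

attribute [local instance] frobeniusInnerProductSpace

theorem frobNorm_eq_norm {N₁ N₂ : ℕ} (Z : Matrix (Fin N₁) (Fin N₂) ℝ) : frobNorm Z = ‖Z‖ :=
  (frobenius_norm_eq_sqrt Z).symm

theorem frobInner_eq_inner {N₁ N₂ : ℕ} (A B : Matrix (Fin N₁) (Fin N₂) ℝ) :
    frobInner A B = ⟪A, B⟫ :=
  rfl

theorem isBestRankApprox_iff_isMinOn {N₁ N₂ k : ℕ} {Z H : Matrix (Fin N₁) (Fin N₂) ℝ} :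
    IsBestRankApprox k Z H ↔
      H.rank ≤ k ∧ IsMinOn (fun W ↦ ‖Z - W‖) {W | W.rank ≤ k} H := by
  simp only [IsBestRankApprox, frobNorm_eq_norm, isMinOn_iff, Set.mem_ofPred_eq]

theorem rank_smul_le {m n R : Type*} [Fintype n] [CommSemiring R] [StrongRankCondition R]
    (t : R) (Z : Matrix m n R) : (t • Z).rank ≤ Z.rank := by
  classical
  simpa using Matrix.rank_mul_le_left Z (t • (1 : Matrix n n R))

/-- If ‖𝓐(Z)‖₁ ≤ β‖Z‖_F for all Z of rank ≤ k, |wᵢ| ≤ 1 for all i, and H is a best rank-k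
approximation of 𝓐*(w), then ‖H‖_F ≤ β. -/
theorem stmt8 {N₁ N₂ m : ℕ} (k : ℕ) (hk : 0 < k) (hkdim : k ≤ min N₁ N₂)
    (A : Matrix (Fin N₁) (Fin N₂) ℝ →ₗ[ℝ] (Fin m → ℝ))
    (Astar : (Fin m → ℝ) →ₗ[ℝ] Matrix (Fin N₁) (Fin N₂) ℝ)
    (hadj : ∀ (u : Fin m → ℝ) (Z : Matrix (Fin N₁) (Fin N₂) ℝ),
      frobInner (Astar u) Z = ∑ i, u i * A Z i)
    (β : ℝ) (hβ : 0 < β)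
    (hup : ∀ Z : Matrix (Fin N₁) (Fin N₂) ℝ, Z.rank ≤ k → l1norm (A Z) ≤ β * frobNorm Z)
    (w : Fin m → ℝ) (hw : ∀ i, |w i| ≤ 1)
    (H : Matrix (Fin N₁) (Fin N₂) ℝ) (hH : IsBestRankApprox k (Astar w) H) :
    frobNorm H ≤ β := by
  simp only [frobNorm_eq_norm, frobInner_eq_inner, isBestRankApprox_iff_isMinOn] at hadj hup hH ⊢
  exact stmt8_general (fun t _ Z (hZ : Z.rank ≤ k) ↦ (rank_smul_le t Z).trans hZ)
    A Astar hadj hβ.le hup hw hH.1 hH.2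
end

section
/- Let K and t be positive integers with t ≤ K ≤ min{N₁, N₂}, let 𝓐 : ℝ^{N₁×N₂} → ℝ^m satisfy the modified rank-restricted isometry property of order K with constants 0 < α ≤ β, and let γ := β/α ≥ 1. Let w ∈ ℝ^m with |wᵢ| ≤ 1 for all i, and let W be a nonzero best rank-t approximation of 𝓐*(w). Then β²/(4γ⁴) ≤ max{‖W‖_F², (1/(4γ²))·‖𝓐(W)‖₁²/‖W‖_F²} ≤ β². -/
/-!
A best approximation `W` of `Z = 𝓐*(w)` from a set closed under scalar multiplication is the
orthogonal projection of `Z` onto the line spanned by `W`, so `⟪Z, W⟫ = ‖W‖²`. On the other hand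
`⟪Z, W⟫ = ⟪w, 𝓐(W)⟫ ≤ ‖𝓐(W)‖₁` because the entries of `w` have modulus at most one. Hence
`‖W‖ ≤ ‖𝓐(W)‖₁ / ‖W‖`, and the isometry property places the right-hand side in `[α, β]`.
-/

open scoped RealInnerProductSpace

theorem dotProduct_le_mul_l1norm {m : ℕ} {w : Fin m → ℝ} {C : ℝ} (hw : ∀ i, |w i| ≤ C)
    (v : Fin m → ℝ) : w ⬝ᵥ v ≤ C * l1norm v := by
  rw [l1norm, Finset.mul_sum]
  refine Finset.sum_le_sum fun i _ => ?_
  calc w i * v i ≤ |w i| * |v i| := (le_abs_self _).trans_eq (abs_mul _ _)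
    _ ≤ C * |v i| := by gcongr; exact hw i

section InnerProductSpace

variable {E : Type*} [NormedAddCommGroup E] [InnerProductSpace ℝ E]

theorem real_inner_eq_norm_sq_of_norm_sub_le_norm_sub_smul {x z : E}
    (hmin : ∀ c : ℝ, ‖z - x‖ ≤ ‖z - c • x‖) : ⟪z, x⟫ = ‖x‖ ^ 2 := by
  have hx : x ∈ ℝ ∙ x := Submodule.mem_span_singleton_self x
  have hdist : ‖z - x‖ = ⨅ y : (↑(ℝ ∙ x) : Set E), ‖z - y‖ := by
    refine le_antisymm (le_ciInf ?_) (ciInf_le_of_le ⟨0, ?_⟩ ⟨x, hx⟩ le_rfl)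
    · rintro ⟨y, hy⟩
      obtain ⟨c, rfl⟩ := Submodule.mem_span_singleton.1 hy
      exact hmin c
    · rintro _ ⟨y, rfl⟩
      exact norm_nonneg _
  have horth : ⟪z - x, x⟫ = 0 :=
    ((ℝ ∙ x).norm_eq_iInf_iff_real_inner_eq_zero hx).1 hdist x hx
  rwa [inner_sub_left, real_inner_self_eq_norm_sq, sub_eq_zero] at horth

-- `z` and `v` stand for `𝓐*(w)` and `𝓐(x)`.
theorem stmt10_general {m : ℕ} {x z : E} (hx : x ≠ 0)
    (hmin : ∀ c : ℝ, ‖z - x‖ ≤ ‖z - c • x‖) {w v : Fin m → ℝ} (hw : ∀ i, |w i| ≤ 1)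
    (hadj : ⟪z, x⟫ = w ⬝ᵥ v) {α β γ : ℝ} (hα : 0 < α) (hlower : α * ‖x‖ ≤ l1norm v)
    (hupper : l1norm v ≤ β * ‖x‖) (hγ : γ = β / α) :
    β ^ 2 / (4 * γ ^ 4) ≤ max (‖x‖ ^ 2) ((1 / (4 * γ ^ 2)) * l1norm v ^ 2 / ‖x‖ ^ 2) ∧
      max (‖x‖ ^ 2) ((1 / (4 * γ ^ 2)) * l1norm v ^ 2 / ‖x‖ ^ 2) ≤ β ^ 2 := by
  have hx_pos : 0 < ‖x‖ := norm_pos_iff.2 hx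
  have hnorm_sq : ‖x‖ ^ 2 ≤ l1norm v := by
    rw [← real_inner_eq_norm_sq_of_norm_sub_le_norm_sub_smul hmin, hadj]
    simpa only [one_mul] using dotProduct_le_mul_l1norm hw v
  obtain ⟨r, hr⟩ : ∃ r, r = l1norm v / ‖x‖ := ⟨_, rfl⟩
  have hαr : α ≤ r := hr ▸ (le_div_iff₀ hx_pos).2 hlower
  have hrβ : r ≤ β := hr ▸ (div_le_iff₀ hx_pos).2 hupper
  have hxr : ‖x‖ ≤ r := hr ▸ (le_div_iff₀ hx_pos).2 (by rwa [← sq])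
  have hγ_one : 1 ≤ γ := hγ ▸ (one_le_div hα).2 (hαr.trans hrβ)
  have hγβ : β = γ * α := by rw [hγ, div_mul_cancel₀ _ hα.ne']
  have hterm : (1 / (4 * γ ^ 2)) * l1norm v ^ 2 / ‖x‖ ^ 2 = (r / (2 * γ)) ^ 2 := by
    rw [hr]; ring
  rw [hterm]
  refine ⟨le_max_of_le_right ?_, max_le ?_ ?_⟩
  · calc β ^ 2 / (4 * γ ^ 4) = (α / (2 * γ)) ^ 2 := by rw [hγβ]; field_simp; norm_num
      _ ≤ (r / (2 * γ)) ^ 2 := by gcongr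
  · gcongr
    exact hxr.trans hrβ
  · have hr_nonneg : 0 ≤ r := hα.le.trans hαr
    gcongr
    exact (div_le_self hr_nonneg (by linarith)).trans hrβ

end InnerProductSpace

theorem matrix_rank_smul_le {l n R : Type*} [Fintype n] [CommSemiring R] [StrongRankCondition R]
    (c : R) (W : Matrix l n R) : (c • W).rank ≤ W.rank := by
  classical
  calc (c • W).rank = (W * (c • (1 : Matrix n n R))).rank := by rw [Matrix.mul_smul, Matrix.mul_one]
    _ ≤ W.rank := Matrix.rank_mul_le_left _ _

section Frobenius

variable {N₁ N₂ k : ℕ}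

/-- Vectorization of matrices, which identifies the Frobenius structure given by `frobNorm` and
`frobInner` with that of a Euclidean space. -/
def frobEquiv : Matrix (Fin N₁) (Fin N₂) ℝ ≃ₗ[ℝ] EuclideanSpace ℝ (Fin N₁ × Fin N₂) :=
  (LinearEquiv.curry ℝ ℝ (Fin N₁) (Fin N₂)).symm ≪≫ₗ (WithLp.linearEquiv 2 ℝ _).symm

theorem frobEquiv_apply (Z : Matrix (Fin N₁) (Fin N₂) ℝ) (i : Fin N₁) (j : Fin N₂) :
    frobEquiv Z (i, j) = Z i j :=
  rfl

theorem norm_frobEquiv (Z : Matrix (Fin N₁) (Fin N₂) ℝ) : ‖frobEquiv Z‖ = frobNorm Z := by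
  simp only [EuclideanSpace.norm_eq, frobNorm, Fintype.sum_prod_type, frobEquiv_apply,
    Real.norm_eq_abs, sq_abs]

theorem inner_frobEquiv (Z W : Matrix (Fin N₁) (Fin N₂) ℝ) :
    ⟪frobEquiv Z, frobEquiv W⟫ = frobInner Z W := by
  simp only [PiLp.inner_apply, frobInner, Fintype.sum_prod_type, frobEquiv_apply,
    RCLike.inner_apply', conj_trivial]

theorem IsBestRankApprox.norm_frobEquiv_sub_le {Z W : Matrix (Fin N₁) (Fin N₂) ℝ}
    (hW : IsBestRankApprox k Z W) (c : ℝ) :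
    ‖frobEquiv Z - frobEquiv W‖ ≤ ‖frobEquiv Z - c • frobEquiv W‖ := by
  simp only [← map_smul, ← map_sub, norm_frobEquiv]
  exact hW.2 (c • W) ((matrix_rank_smul_le c W).trans hW.1)

end Frobenius

/-- Under the modified rank-restricted isometry property of order K with constants 0 < α ≤ β
and γ := β/α, if |wᵢ| ≤ 1 for all i and W is a nonzero best rank-t approximation of 𝓐*(w)
(with t ≤ K), then β²/(4γ⁴) ≤ max{‖W‖_F², (1/(4γ²))·‖𝓐(W)‖₁²/‖W‖_F²} ≤ β². -/
theorem stmt10 {N₁ N₂ m : ℕ} (K t : ℕ) (ht : 0 < t) (htK : t ≤ K) (hK : K ≤ min N₁ N₂)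
    (A : Matrix (Fin N₁) (Fin N₂) ℝ →ₗ[ℝ] (Fin m → ℝ))
    (Astar : (Fin m → ℝ) →ₗ[ℝ] Matrix (Fin N₁) (Fin N₂) ℝ)
    (hadj : ∀ (u : Fin m → ℝ) (Z : Matrix (Fin N₁) (Fin N₂) ℝ),
      frobInner (Astar u) Z = ∑ i, u i * A Z i)
    (α β : ℝ) (hα : 0 < α) (hαβ : α ≤ β)
    (hRIP : ∀ Z : Matrix (Fin N₁) (Fin N₂) ℝ, Z.rank ≤ K →
      α * frobNorm Z ≤ l1norm (A Z) ∧ l1norm (A Z) ≤ β * frobNorm Z)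
    (γ : ℝ) (hγ : γ = β / α)
    (w : Fin m → ℝ) (hw : ∀ i, |w i| ≤ 1)
    (W : Matrix (Fin N₁) (Fin N₂) ℝ) (hW0 : W ≠ 0)
    (hW : IsBestRankApprox t (Astar w) W) :
    β ^ 2 / (4 * γ ^ 4) ≤
        max (frobNorm W ^ 2) ((1 / (4 * γ ^ 2)) * l1norm (A W) ^ 2 / frobNorm W ^ 2) ∧
      max (frobNorm W ^ 2) ((1 / (4 * γ ^ 2)) * l1norm (A W) ^ 2 / frobNorm W ^ 2) ≤ β ^ 2 := by
  simp only [← norm_frobEquiv] at hRIP ⊢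
  obtain ⟨hlower, hupper⟩ := hRIP W (hW.1.trans htK)
  exact stmt10_general (frobEquiv.map_ne_zero_iff.2 hW0) hW.norm_frobEquiv_sub_le hw
    ((inner_frobEquiv _ _).trans (hadj w W)) hα hlower hupper hγ
end

section
/- Let c be a real number with 0 < |c| < 1. Then the 2×2 matrix [[3, 0], [0, 0]] is the unique best rank-1 approximation (in Frobenius norm) of the matrix Z = [[3, 0], [0, 3c]], but [[3, 0], [0, 0]] is NOT a best rank-1 approximation of the matrix [[3, c], [c, c]]. (The matrix [[3, c], [c, c]] is the orthogonal projection, with respect to the Frobenius inner product, of Z onto the subspace of ℝ^{2×2} spanned by [[1, 0], [0, 0]] and [[1, 1], [1, 1]], a subspace that contains the rank-one matrix [[1, 0], [0, 0]] arising from the top singular vectors of Z.) -/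
/-!
If `W` has rank at most one, its `2 × 2` minors vanish, so `W j j * W k k = W j k * W k j` and
therefore `(∑ j, |W j j|) ^ 2 ≤ ‖W‖²`. Expanding `‖diagonal d - W‖²` and completing the square in
`|d i| - ∑ j, |W j j|`, where `|d i|` is maximal, shows that truncating to the entry `d i` is
optimal; if `|d i|` is strictly maximal, equality forces `W j j = 0` for `j ≠ i`, and then `W` is
the truncation by Pythagoras.

In the other direction, if `H` is a best rank-`k` approximation of `Z`, every `(1 + t • A) * H` is
a competitor, since it also has rank at most `k`; varying `t` shows that `Z - H` is orthogonal to
every `A * H`, that is `(Z - H) * Hᵀ = 0`. For `Z = !![3, c; c, c]` and `H = !![3, 0; 0, 0]` this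
product has the entry `3 * c`.
-/

open scoped Matrix

section FrobInner

variable {m n : ℕ}

theorem frobNorm_eq_sqrt_frobInner (A : Matrix (Fin m) (Fin n) ℝ) :
    frobNorm A = √(frobInner A A) := by
  simp only [frobNorm, frobInner, sq]

theorem frobInner_self_nonneg (A : Matrix (Fin m) (Fin n) ℝ) : 0 ≤ frobInner A A :=
  Finset.sum_nonneg fun i _ ↦ Finset.sum_nonneg fun j _ ↦ mul_self_nonneg (A i j)

theorem frobNorm_le_frobNorm_iff {A B : Matrix (Fin m) (Fin n) ℝ} :
    frobNorm A ≤ frobNorm B ↔ frobInner A A ≤ frobInner B B := by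
  rw [frobNorm_eq_sqrt_frobInner, frobNorm_eq_sqrt_frobInner,
    Real.sqrt_le_sqrt_iff (frobInner_self_nonneg B)]

theorem frobInner_eq_trace_s13 (A B : Matrix (Fin m) (Fin n) ℝ) :
    frobInner A B = (Aᵀ * B).trace := by
  simp only [frobInner, Matrix.trace, Matrix.diag_apply, Matrix.mul_apply, Matrix.transpose_apply]
  exact Finset.sum_comm

theorem frobInner_self_eq_zero {A : Matrix (Fin m) (Fin n) ℝ} : frobInner A A = 0 ↔ A = 0 := by
  rw [frobInner_eq_trace_s13, ← Matrix.conjTranspose_eq_transpose_of_trivial,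
    Matrix.trace_conjTranspose_mul_self_eq_zero_iff]

theorem frobInner_mul_eq_frobInner_mul_transpose {k : ℕ} (E : Matrix (Fin m) (Fin n) ℝ)
    (A : Matrix (Fin m) (Fin k) ℝ) (H : Matrix (Fin k) (Fin n) ℝ) :
    frobInner E (A * H) = frobInner (E * Hᵀ) A := by
  rw [frobInner_eq_trace_s13, frobInner_eq_trace_s13, Matrix.transpose_mul, Matrix.transpose_transpose,
    ← Matrix.mul_assoc, Matrix.trace_mul_cycle]

theorem frobInner_sub_smul_self (A B : Matrix (Fin m) (Fin n) ℝ) (t : ℝ) :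
    frobInner (A - t • B) (A - t • B) =
      frobInner A A - 2 * t * frobInner A B + t ^ 2 * frobInner B B := by
  simp only [frobInner, Finset.mul_sum, ← Finset.sum_sub_distrib, ← Finset.sum_add_distrib,
    Matrix.sub_apply, Matrix.smul_apply, smul_eq_mul]
  refine Finset.sum_congr rfl fun i _ ↦ Finset.sum_congr rfl fun j _ ↦ ?_
  ring

theorem frobInner_sub_self (A B : Matrix (Fin m) (Fin n) ℝ) :
    frobInner (A - B) (A - B) = frobInner A A - 2 * frobInner A B + frobInner B B := by
  simpa using frobInner_sub_smul_self A B 1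

theorem frobInner_eq_zero_of_forall_le_sub_smul {A B : Matrix (Fin m) (Fin n) ℝ}
    (h : ∀ t : ℝ, frobInner A A ≤ frobInner (A - t • B) (A - t • B)) : frobInner A B = 0 := by
  have hquad (t : ℝ) : 0 ≤ frobInner B B * (t * t) + -2 * frobInner A B * t + 0 := by
    linarith [h t, frobInner_sub_smul_self A B t]
  have hdiscrim : (-2 * frobInner A B) ^ 2 - 4 * frobInner B B * 0 ≤ 0 := discrim_le_zero hquad
  exact pow_eq_zero_iff two_ne_zero |>.mp (by nlinarith [sq_nonneg (frobInner A B)])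

theorem frobInner_diagonal_left (d : Fin n → ℝ) (W : Matrix (Fin n) (Fin n) ℝ) :
    frobInner (Matrix.diagonal d) W = ∑ j, d j * W j j := by
  simp [frobInner, Matrix.diagonal_apply]

end FrobInner

theorem IsBestRankApprox.sub_mul_transpose_eq_zero {m n k : ℕ} {Z H : Matrix (Fin m) (Fin n) ℝ}
    (h : IsBestRankApprox k Z H) : (Z - H) * Hᵀ = 0 := by
  have horth (A : Matrix (Fin m) (Fin m) ℝ) : frobInner (Z - H) (A * H) = 0 := by
    refine frobInner_eq_zero_of_forall_le_sub_smul fun t ↦ ?_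
    have hrank : ((1 + t • A) * H).rank ≤ k := (Matrix.rank_mul_le_right _ _).trans h.1
    have hcompetitor : Z - (1 + t • A) * H = Z - H - t • (A * H) := by
      rw [Matrix.add_mul, Matrix.one_mul, Matrix.smul_mul, sub_add_eq_sub_sub]
    simpa only [hcompetitor] using frobNorm_le_frobNorm_iff.mp (h.2 _ hrank)
  rw [← frobInner_self_eq_zero, ← frobInner_mul_eq_frobInner_mul_transpose]
  exact horth _

section RankLeOne

theorem det_submatrix_eq_zero_of_rank_lt {R m n p : Type*} [CommRing R] [IsDomain R] [Fintype n]
    [Fintype p] [DecidableEq p] {A : Matrix m n R} (h : A.rank < Fintype.card p) (r : p → m)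
    (c : p → n) : (A.submatrix r c).det = 0 := by
  contrapose! h
  rw [← Matrix.rank_of_det_ne_zero h]
  exact A.rank_submatrix_le r c

theorem mul_apply_eq_mul_apply_of_rank_le_one {R m n : Type*} [CommRing R] [IsDomain R]
    [Fintype n] {A : Matrix m n R} (h : A.rank ≤ 1) (i j : m) (k l : n) :
    A i k * A j l = A i l * A j k := by
  have hminor : (A.submatrix ![i, j] ![k, l]).det = 0 :=
    det_submatrix_eq_zero_of_rank_lt (by simpa using Nat.lt_succ_of_le h) _ _
  rw [Matrix.det_fin_two] at hminor
  exact sub_eq_zero.mp hminor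

theorem sq_sum_abs_diag_le_frobInner_self_of_rank_le_one {n : ℕ} {W : Matrix (Fin n) (Fin n) ℝ}
    (h : W.rank ≤ 1) : (∑ j, |W j j|) ^ 2 ≤ frobInner W W := by
  have hentry (j k : Fin n) : |W j j| * |W k k| ≤ (W j k * W j k + W k j * W k j) / 2 := by
    rw [← abs_mul, mul_apply_eq_mul_apply_of_rank_le_one h, abs_mul]
    nlinarith [two_mul_le_add_sq |W j k| |W k j|, sq_abs (W j k), sq_abs (W k j)]
  calc (∑ j, |W j j|) ^ 2 = ∑ j, ∑ k, |W j j| * |W k k| := by rw [sq, Finset.sum_mul_sum]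
    _ ≤ ∑ j, ∑ k, (W j k * W j k + W k j * W k j) / 2 :=
      Finset.sum_le_sum fun j _ ↦ Finset.sum_le_sum fun k _ ↦ hentry j k
    _ = (frobInner W W + ∑ j, ∑ k, W k j * W k j) / 2 := by
      simp only [frobInner, ← Finset.sum_div, Finset.sum_add_distrib]
    _ = frobInner W W := by rw [Finset.sum_comm, ← frobInner, add_self_div_two]

theorem rank_single_le_one {R m n : Type*} [CommSemiring R] [StrongRankCondition R] [Fintype n]
    [DecidableEq m] [DecidableEq n] (i : m) (j : n) (a : R) : (Matrix.single i j a).rank ≤ 1 := by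
  have hfactor : Matrix.single i j a = Matrix.vecMulVec (a • Pi.single i 1) (Pi.single j 1) := by
    rw [Matrix.smul_vecMulVec, ← Matrix.single_eq_single_vecMulVec_single, Matrix.smul_single,
      smul_eq_mul, mul_one]
  rw [hfactor]
  exact Matrix.rank_vecMulVec_le _ _

end RankLeOne

section Diagonal

theorem mul_le_abs_mul_abs_of_abs_le {α : Type*} [CommRing α] [LinearOrder α]
    [IsStrictOrderedRing α] {a b x : α} (h : |a| ≤ |b|) : a * x ≤ |b| * |x| :=
  (le_abs_self _).trans <| (abs_mul a x).trans_le <| by gcongr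

theorem diagonal_sub_single {ι G : Type*} [DecidableEq ι] [AddGroup G] (d : ι → G) (i : ι) :
    Matrix.diagonal d - Matrix.single i i (d i) = Matrix.diagonal (d - Pi.single i (d i)) := by
  rw [← Matrix.diagonal_single, Matrix.diagonal_sub]
  rfl

variable {n : ℕ}

theorem frobInner_diagonal_sub_single_self (d : Fin n → ℝ) (i : Fin n) :
    frobInner (Matrix.diagonal d - Matrix.single i i (d i))
        (Matrix.diagonal d - Matrix.single i i (d i)) =
      frobInner (Matrix.diagonal d) (Matrix.diagonal d) - d i ^ 2 := by
  have hcross : frobInner (Matrix.diagonal d) (Matrix.single i i (d i)) = d i ^ 2 := by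
    simp [frobInner_diagonal_left, ← Matrix.diagonal_single, Pi.single_apply, sq]
  have hself : frobInner (Matrix.single i i (d i)) (Matrix.single i i (d i)) = d i ^ 2 := by
    simp [← Matrix.diagonal_single, frobInner_diagonal_left, Pi.single_apply, sq]
  rw [frobInner_sub_self, hcross, hself]
  ring

theorem frobInner_diagonal_sub_single_self_add_le (d : Fin n → ℝ) (i : Fin n)
    {W : Matrix (Fin n) (Fin n) ℝ} (hW : W.rank ≤ 1) :
    frobInner (Matrix.diagonal d - Matrix.single i i (d i))
        (Matrix.diagonal d - Matrix.single i i (d i)) +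
      2 * ∑ j, (|d i| * |W j j| - d j * W j j) ≤
      frobInner (Matrix.diagonal d - W) (Matrix.diagonal d - W) := by
  rw [frobInner_diagonal_sub_single_self, frobInner_sub_self, frobInner_diagonal_left d W,
    Finset.sum_sub_distrib, ← Finset.mul_sum]
  linarith [sq_sum_abs_diag_le_frobInner_self_of_rank_le_one hW,
    sq_nonneg (|d i| - ∑ j, |W j j|), sub_sq |d i| (∑ j, |W j j|), sq_abs (d i)]

variable {d : Fin n → ℝ} {i : Fin n}

theorem isBestRankApprox_one_diagonal_single (h : ∀ j, |d j| ≤ |d i|) :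
    IsBestRankApprox 1 (Matrix.diagonal d) (Matrix.single i i (d i)) := by
  refine ⟨rank_single_le_one i i _, fun W hW ↦ frobNorm_le_frobNorm_iff.mpr ?_⟩
  have hslack : 0 ≤ ∑ j, (|d i| * |W j j| - d j * W j j) :=
    Finset.sum_nonneg fun j _ ↦ sub_nonneg.mpr (mul_le_abs_mul_abs_of_abs_le (h j))
  linarith [frobInner_diagonal_sub_single_self_add_le d i hW]

theorem IsBestRankApprox.apply_diag_eq_zero {H : Matrix (Fin n) (Fin n) ℝ}
    (hH : IsBestRankApprox 1 (Matrix.diagonal d) H) (hmax : ∀ j, |d j| ≤ |d i|)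
    {j : Fin n} (hj : |d j| < |d i|) : H j j = 0 := by
  have hterm (k : Fin n) : 0 ≤ |d i| * |H k k| - d k * H k k :=
    sub_nonneg.mpr (mul_le_abs_mul_abs_of_abs_le (hmax k))
  have hsum : ∑ k, (|d i| * |H k k| - d k * H k k) ≤ 0 := by
    linarith [frobInner_diagonal_sub_single_self_add_le d i hH.1,
      frobNorm_le_frobNorm_iff.mp (hH.2 _ (rank_single_le_one i i (d i)))]
  have hzero : |d i| * |H j j| ≤ d j * H j j :=
    sub_nonpos.mp <|
      (Finset.single_le_sum (fun k _ ↦ hterm k) (Finset.mem_univ j)).trans hsum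
  by_contra hne
  have hlt : |d j| * |H j j| < |d i| * |H j j| :=
    mul_lt_mul_of_pos_right hj (abs_pos.mpr hne)
  exact (hlt.trans_le hzero).not_ge (mul_le_abs_mul_abs_of_abs_le le_rfl)

theorem IsBestRankApprox.eq_single {H : Matrix (Fin n) (Fin n) ℝ}
    (hH : IsBestRankApprox 1 (Matrix.diagonal d) H) (h : ∀ j ≠ i, |d j| < |d i|) :
    H = Matrix.single i i (d i) := by
  have hmax (j : Fin n) : |d j| ≤ |d i| := by
    obtain rfl | hj := eq_or_ne j i
    exacts [le_rfl, (h j hj).le]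
  set S := Matrix.single i i (d i) with hS
  have horth : frobInner (Matrix.diagonal d - S) (H - S) = 0 := by
    rw [hS, diagonal_sub_single, frobInner_diagonal_left]
    refine Finset.sum_eq_zero fun j _ ↦ ?_
    obtain rfl | hj := eq_or_ne j i
    · simp
    · simp [hH.apply_diag_eq_zero hmax (h j hj), hj.symm]
  have hle := frobNorm_le_frobNorm_iff.mp (hH.2 S (rank_single_le_one i i _))
  rw [← sub_sub_sub_cancel_right _ H S, frobInner_sub_self, horth] at hle
  have hdist : frobInner (H - S) (H - S) = 0 :=
    le_antisymm (by linarith) (frobInner_self_nonneg _)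
  exact sub_eq_zero.mp (frobInner_self_eq_zero.mp hdist)

end Diagonal

/-- For 0 < |c| < 1: the matrix [[3,0],[0,0]] is the unique best rank-1 approximation of
Z = [[3,0],[0,3c]], but [[3,0],[0,0]] is not a best rank-1 approximation of [[3,c],[c,c]]
(the projection of Z onto span{[[1,0],[0,0]], [[1,1],[1,1]]}). -/
theorem stmt13 (c : ℝ) (hc0 : c ≠ 0) (hc1 : |c| < 1) :
    (IsBestRankApprox 1 (!![(3 : ℝ), 0; 0, 3 * c]) (!![(3 : ℝ), 0; 0, 0]) ∧
      ∀ H : Matrix (Fin 2) (Fin 2) ℝ,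
        IsBestRankApprox 1 (!![(3 : ℝ), 0; 0, 3 * c]) H → H = !![(3 : ℝ), 0; 0, 0]) ∧
    ¬ IsBestRankApprox 1 (!![(3 : ℝ), c; c, c]) (!![(3 : ℝ), 0; 0, 0]) := by
  have hZ : !![(3 : ℝ), 0; 0, 3 * c] = Matrix.diagonal ![3, 3 * c] := by
    simp [← Matrix.ext_iff]
  have hH : !![(3 : ℝ), 0; 0, 0] = Matrix.single 0 0 (![3, 3 * c] 0) := by
    simp [← Matrix.ext_iff]
  have hgap : ∀ j ≠ (0 : Fin 2), |![3, 3 * c] j| < |![3, 3 * c] 0| := by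
    simp [Fin.forall_fin_two, abs_mul, hc1]
  have hmax : ∀ j, |![3, 3 * c] j| ≤ |![3, 3 * c] 0| := by
    simp [Fin.forall_fin_two, abs_mul, hc1.le]
  refine ⟨?_, fun hbest ↦ hc0 ?_⟩
  · rw [hZ, hH]
    exact ⟨isBestRankApprox_one_diagonal_single hmax, fun H hbest ↦ hbest.eq_single hgap⟩
  · simpa [Matrix.mul_apply] using congr_fun₂ hbest.sub_mul_transpose_eq_zero 1 0
end
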